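/- Let T and S be invertible measure-preserving transformations of probability spaces (X, μ) and (Y, ν) respectively. If T × T is ergodic with respect to μ ⊗ μ and S is ergodic, then T × S is ergodic with respect to μ ⊗ ν. -/

import Mathlib

open MeasureTheory

/-- A function in `[0,1]` with zero variance is almost everywhere constant. -/
lemma ae_const_of_variance_zero {Y : Type*} [MeasurableSpace Y] (ν : Measure Y)
    [IsProbabilityMeasure ν] (F : Y → ENNReal) (hF : Measurable F) (hF1 : ∀ y, F y ≤ 1)
    (a : ENNReal) (h1 : ∫⁻ y, F y ∂ν = a) (h2 : ∫⁻ y, F y * F y ∂ν = a * a) :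
    ∀ᵐ y ∂ν, F y = a := by
  have hfin : ∀ y, F y ≠ ⊤ := fun y => ne_top_of_le_ne_top ENNReal.one_ne_top (hF1 y)
  have ha : a ≠ ⊤ := by
    rw [← h1]
    refine ne_top_of_le_ne_top ENNReal.one_ne_top ?_
    calc ∫⁻ y, F y ∂ν ≤ ∫⁻ _, 1 ∂ν := lintegral_mono hF1
      _ = 1 := by simp
  have hfm : Measurable (fun y => (F y).toReal) := hF.ennreal_toReal
  have hb : ∀ y, (F y).toReal ≤ 1 := fun y => by
    simpa using ENNReal.toReal_mono ENNReal.one_ne_top (hF1 y)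
  have i1 : Integrable (fun y => (F y).toReal) ν := by
    refine Integrable.of_bound hfm.aestronglyMeasurable 1 (Filter.Eventually.of_forall fun y => ?_)
    rw [Real.norm_of_nonneg ENNReal.toReal_nonneg]
    exact hb y
  have i2 : Integrable (fun y => (F y).toReal * (F y).toReal) ν := by
    refine Integrable.of_bound (hfm.mul hfm).aestronglyMeasurable 1
      (Filter.Eventually.of_forall fun y => ?_)
    rw [Real.norm_of_nonneg (mul_nonneg ENNReal.toReal_nonneg ENNReal.toReal_nonneg)]
    exact mul_le_one₀ (hb y) ENNReal.toReal_nonneg (hb y)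
  have e1 : ∫ y, (F y).toReal ∂ν = a.toReal := by
    rw [integral_toReal hF.aemeasurable (Filter.Eventually.of_forall fun y => (hfin y).lt_top), h1]
  have e2 : ∫ y, (F y).toReal * (F y).toReal ∂ν = a.toReal * a.toReal := by
    simp_rw [← ENNReal.toReal_mul]
    rw [integral_toReal (f := fun y => F y * F y) (hF.mul hF).aemeasurable
      (Filter.Eventually.of_forall fun y => (ENNReal.mul_ne_top (hfin y) (hfin y)).lt_top), h2]
  have e3 : ∫ y, ((F y).toReal - a.toReal) ^ 2 ∂ν = 0 := by
    have : ∀ y, ((F y).toReal - a.toReal) ^ 2 =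
        (F y).toReal * (F y).toReal - 2 * a.toReal * (F y).toReal + a.toReal * a.toReal :=
      fun y => by ring
    simp_rw [this]
    have i4 : Integrable (fun y => (F y).toReal * (F y).toReal - 2 * a.toReal * (F y).toReal) ν :=
      i2.sub (i1.const_mul _)
    rw [integral_add i4 (integrable_const _),
      integral_sub i2 (i1.const_mul _), integral_const_mul, e1, e2]
    simp
    ring
  have i3 : Integrable (fun y => ((F y).toReal - a.toReal) ^ 2) ν := by
    have : (fun y => ((F y).toReal - a.toReal) ^ 2) = fun y =>
        (F y).toReal * (F y).toReal - 2 * a.toReal * (F y).toReal + a.toReal * a.toReal := by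
      funext y; ring
    rw [this]
    exact (i2.sub (i1.const_mul _)).add (integrable_const _)
  have h0 := (integral_eq_zero_iff_of_nonneg (fun y => sq_nonneg _) i3).1 e3
  filter_upwards [h0] with y hy
  have hy' : ((F y).toReal - a.toReal) ^ 2 = 0 := hy
  rw [sq_eq_zero_iff, sub_eq_zero] at hy'
  exact (ENNReal.toReal_eq_toReal_iff' (hfin y) ha).1 hy'

/-- If `T` and `S` are invertible measure-preserving transformations of probability
spaces `(X, μ)` and `(Y, ν)`, `T × T` is ergodic with respect to `μ ⊗ μ`, and `S` is
ergodic, then `T × S` is ergodic with respect to `μ ⊗ ν`. -/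
theorem stmt5 {X Y : Type*} [MeasurableSpace X] [MeasurableSpace Y]
    (μ : Measure X) (ν : Measure Y) [IsProbabilityMeasure μ] [IsProbabilityMeasure ν]
    (T : X → X) (S : Y → Y)
    (hTbij : Function.Bijective T) (hSbij : Function.Bijective S)
    (hT : MeasurePreserving T μ μ) (hS : MeasurePreserving S ν ν)
    (hTT : Ergodic (Prod.map T T) (μ.prod μ)) (hSerg : Ergodic S ν) :
    Ergodic (Prod.map T S) (μ.prod ν) := by
  refine ⟨hT.prod hS, ⟨fun A hA hinv => ?_⟩⟩
  have hmem : ∀ x y, (T x, S y) ∈ A ↔ (x, y) ∈ A := fun x y => by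
    conv_rhs => rw [← hinv]
    rfl
  -- the triple set
  let E : Set X → Set ((X × X) × Y) := fun B =>
    {p | (p.1.1 ∈ B ∧ p.1.2 ∈ B) ∧ ((p.1.1, p.2) ∈ A ∧ (p.1.2, p.2) ∈ A)}
  have hE : ∀ B, MeasurableSet B → MeasurableSet (E B) := fun B hB => by
    have m1 : Measurable (fun p : (X × X) × Y => p.1.1) := by fun_prop
    have m2 : Measurable (fun p : (X × X) × Y => p.1.2) := by fun_prop
    have m3 : Measurable (fun p : (X × X) × Y => (p.1.1, p.2)) := by fun_prop
    have m4 : Measurable (fun p : (X × X) × Y => (p.1.2, p.2)) := by fun_prop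
    exact ((m1 hB).inter (m2 hB)).inter ((m3 hA).inter (m4 hA))
  -- the kernel is constant
  let K : X × X → ENNReal := fun p => ν {y | (p.1, y) ∈ A ∧ (p.2, y) ∈ A}
  have hKm : Measurable K := by
    have := measurable_measure_prodMk_left (ν := ν) (hE Set.univ MeasurableSet.univ)
    simpa [K, E, Set.preimage] using this
  have hsec : ∀ x, MeasurableSet {y | (x, y) ∈ A} := fun x => measurable_prodMk_left hA
  have hsec' : ∀ y, MeasurableSet {x | (x, y) ∈ A} := fun y => measurable_prodMk_right hA
  obtain ⟨c, hc⟩ := hTT.toPreErgodic.ae_eq_const_of_ae_eq_comp hKm (by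
    funext p
    change ν {y | (T p.1, y) ∈ A ∧ (T p.2, y) ∈ A} = ν {y | (p.1, y) ∈ A ∧ (p.2, y) ∈ A}
    have hms : MeasurableSet {y | (T p.1, y) ∈ A ∧ (T p.2, y) ∈ A} :=
      (hsec (T p.1)).inter (hsec (T p.2))
    rw [← hS.measure_preimage hms.nullMeasurableSet]
    simp [Set.preimage, hmem])
  -- the first marginal is constant
  obtain ⟨d, hd⟩ := hTT.toPreErgodic.ae_eq_const_of_ae_eq_comp
    (g := fun p : X × X => ν {y | (p.1, y) ∈ A})
    ((measurable_measure_prodMk_left (ν := ν) hA).comp measurable_fst) (by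
    funext p
    change ν {y | (T p.1, y) ∈ A} = ν {y | (p.1, y) ∈ A}
    rw [← hS.measure_preimage (hsec (T p.1)).nullMeasurableSet]
    simp [Set.preimage, hmem])
  have hd' : ∀ᵐ x ∂μ, ν {y | (x, y) ∈ A} = d := by
    filter_upwards [Measure.ae_ae_of_ae_prod hd] with x hx
    exact hx.exists.choose_spec
  -- the second marginal is constant
  obtain ⟨m, hm⟩ := hSerg.toPreErgodic.ae_eq_const_of_ae_eq_comp
    (g := fun y : Y => μ {x | (x, y) ∈ A})
    (measurable_measure_prodMk_right (μ := μ) hA) (by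
    funext y
    change μ {x | (x, S y) ∈ A} = μ {x | (x, y) ∈ A}
    rw [← hT.measure_preimage (hsec' (S y)).nullMeasurableSet]
    simp [Set.preimage, hmem])
  -- first moments
  have hAB : ∀ B, MeasurableSet B → MeasurableSet (A ∩ Prod.fst ⁻¹' B) :=
    fun B hB => hA.inter (measurable_fst hB)
  have M1 : ∀ B, MeasurableSet B → ∫⁻ y, μ {x | (x, y) ∈ A ∧ x ∈ B} ∂ν = d * μ B := by
    intro B hB
    have h1 := Measure.prod_apply (μ := μ) (ν := ν) (hAB B hB)
    rw [Measure.prod_apply_symm (hAB B hB)] at h1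
    refine Eq.trans h1 ?_
    rw [← lintegral_indicator_const hB]
    refine lintegral_congr_ae ?_
    filter_upwards [hd'] with x hx
    by_cases hxB : x ∈ B <;> simp [hxB, Set.preimage, hx]
  -- second moments
  have M2 : ∀ B, MeasurableSet B →
      ∫⁻ y, μ {x | (x, y) ∈ A ∧ x ∈ B} * μ {x | (x, y) ∈ A ∧ x ∈ B} ∂ν = c * (μ B * μ B) := by
    intro B hB
    have h1 := Measure.prod_apply (μ := μ.prod μ) (ν := ν) (hE B hB)
    rw [Measure.prod_apply_symm (hE B hB)] at h1
    have h2 : ∀ y, (μ.prod μ) ((fun p => (p, y)) ⁻¹' E B) =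
        μ {x | (x, y) ∈ A ∧ x ∈ B} * μ {x | (x, y) ∈ A ∧ x ∈ B} := fun y => by
      rw [← Measure.prod_prod]
      congr 1
      ext p
      simp only [E, Set.mem_preimage, Set.mem_ofPred_eq, Set.mem_prod]
      tauto
    simp_rw [h2] at h1
    rw [h1, ← Measure.prod_prod, ← lintegral_indicator_const (hB.prod hB)]
    refine lintegral_congr_ae ?_
    filter_upwards [hc] with p hp
    have hp' : ν {y | (p.1, y) ∈ A ∧ (p.2, y) ∈ A} = c := hp
    by_cases hpB : p.1 ∈ B ∧ p.2 ∈ B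
    · rw [Set.indicator_of_mem (show p ∈ B ×ˢ B from hpB), ← hp']
      congr 1
      ext y
      simp [E, hpB]
    · rw [Set.indicator_of_notMem (show p ∉ B ×ˢ B from hpB)]
      have : Prod.mk p ⁻¹' E B = ∅ := by
        ext y
        simp only [E, Set.mem_preimage, Set.mem_ofPred_eq, Set.mem_empty_iff_false, iff_false]
        exact fun h => hpB h.1
      simp [this]
  have hdm : d = m := by
    have := M1 Set.univ MeasurableSet.univ
    simp only [Set.mem_univ, and_true, measure_univ, mul_one] at this
    rw [← this, lintegral_congr_ae hm]
    simp
  have hcm : c = m * m := by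
    have := M2 Set.univ MeasurableSet.univ
    simp only [Set.mem_univ, and_true, measure_univ, mul_one] at this
    have h3 : ∫⁻ y, μ {x | (x, y) ∈ A} * μ {x | (x, y) ∈ A} ∂ν = ∫⁻ _, m * m ∂ν :=
      lintegral_congr_ae (hm.mul hm)
    rw [← this, h3]
    simp
  subst hdm
  subst hcm
  -- independence
  have hconst : ∀ B, MeasurableSet B → ∀ᵐ y ∂ν, μ {x | (x, y) ∈ A ∧ x ∈ B} = d * μ B := by
    intro B hB
    refine ae_const_of_variance_zero ν _ (measurable_measure_prodMk_right (μ := μ) (hAB B hB))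
      (fun y => prob_le_one) _ (M1 B hB) ?_
    refine (M2 B hB).trans ?_
    ring
  have hprod : (μ.prod ν).restrict A = d • (μ.prod ν) := by
    refine Measure.ext_prod fun {B C} hB hC => ?_
    rw [Measure.restrict_apply (hB.prod hC), Measure.smul_apply, Measure.prod_prod,
      Measure.prod_apply_symm ((hB.prod hC).inter hA), smul_eq_mul, ← mul_assoc,
      ← lintegral_indicator_const hC]
    refine lintegral_congr_ae ?_
    filter_upwards [hconst B hB] with y hy
    by_cases hyC : y ∈ C
    · rw [Set.indicator_of_mem hyC, ← hy]
      congr 1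
      ext x
      simp [hyC, and_comm]
    · simp [hyC, Set.preimage]
  have hz : d * (μ.prod ν) Aᶜ = 0 := by
    have := congrArg (fun ρ : Measure (X × Y) => ρ Aᶜ) hprod
    simpa [Measure.restrict_apply hA.compl] using this.symm
  have hdA : (μ.prod ν) A = d := by
    have := congrArg (fun ρ : Measure (X × Y) => ρ Set.univ) hprod
    simpa using this
  rw [Filter.eventuallyConst_set']
  rcases mul_eq_zero.1 hz with h | h
  · left
    exact ae_eq_empty.2 (hdA.trans h)
  · right
    exact ae_eq_univ.2 h
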